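/- arXiv:1202.2881 — 2 statements merged into one kernel-verified Lean document; each statement's English description precedes it below -/
import Mathlib

section
/- For all probability vectors u, v in the K-simplex S_K with v_k > 0 for every k, the relative entropy satisfies H(u, v) ≤ ‖u − v‖ / (min_{1 ≤ k ≤ K} v_k). -/
open Finset Real

/-- Upper bound on the relative entropy: for probability vectors `u, v` in the `K`-simplex
with `v` having positive entries, `H(u,v) ≤ ‖u - v‖₁ / min_k v_k`.
(The convention `0 * log 0 = 0` holds automatically since `Real.log 0 = 0`.) -/
theorem relative_entropy_le_l1_div_min
    (K : ℕ) (hK : 2 ≤ K) (u v : Fin K → ℝ)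
    (hu0 : ∀ k, 0 ≤ u k) (hu1 : ∀ k, u k ≤ 1) (husum : ∑ k, u k = 1)
    (hv1 : ∀ k, v k ≤ 1) (hvsum : ∑ k, v k = 1) (hvpos : ∀ k, 0 < v k) :
    ∑ k, u k * Real.log (u k / v k)
      ≤ (∑ k, |u k - v k|)
          / (Finset.univ.inf' (Finset.univ_nonempty_iff.mpr ⟨⟨0, by omega⟩⟩) v) := by
  have hm : 0 < Finset.univ.inf' (Finset.univ_nonempty_iff.mpr ⟨⟨0, by omega⟩⟩) v := by
    rw [Finset.lt_inf'_iff]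
    exact fun k _ => hvpos k
  rw [Finset.sum_div]
  refine Finset.sum_le_sum fun k _ => ?_
  have hle : Finset.univ.inf' (Finset.univ_nonempty_iff.mpr ⟨⟨0, by omega⟩⟩) v ≤ v k :=
    Finset.inf'_le _ (Finset.mem_univ k)
  refine le_trans ?_ (div_le_div_of_nonneg_left (abs_nonneg _) hm hle)
  rcases (hu0 k).eq_or_lt with h | h
  · rw [← h, zero_mul]
    exact div_nonneg (abs_nonneg _) (hvpos k).le
  · have h1 := Real.log_le_sub_one_of_pos (div_pos h (hvpos k))
    have h2 : u k / v k - 1 = (u k - v k) / v k := by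
      have := (hvpos k).ne'
      field_simp
    have h3 : (u k - v k) / v k ≤ |u k - v k| / v k :=
      div_le_div_of_nonneg_right (le_abs_self _) (hvpos k).le
    have h4 : 0 ≤ |u k - v k| / v k := div_nonneg (abs_nonneg _) (hvpos k).le
    calc u k * Real.log (u k / v k) ≤ u k * (|u k - v k| / v k) :=
          mul_le_mul_of_nonneg_left (by linarith) h.le
      _ ≤ |u k - v k| / v k := mul_le_of_le_one_left h4 (hu1 k)
end

section
/- Let K ≥ 2 be an integer and let η > 0. There exists A > 0 such that for every probability vector v on {1, …, K}, the (K−1)-dimensional Lebesgue measure of the set { u ∈ S : H(v, Lu) ≤ η } is at least A, where H(v, w) = Σ_{k=1}^K v_k·log(v_k/w_k) is the relative entropy (with the conventions 0·log 0 = 0 and v_k·log(v_k/0) = +∞ for v_k > 0). -/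
open MeasureTheory Finset

/-- The map `L` completing a point of
`S = {u ∈ [0,1]^{K-1} : u_1 + ⋯ + u_{K-1} ≤ 1}` into a probability vector on `{1,…,K}`. -/
noncomputable def completeToSimplex (K : ℕ) (u : Fin (K - 1) → ℝ) : Fin K → ℝ :=
  fun k => if h : (k : ℕ) < K - 1 then u ⟨k, h⟩ else 1 - ∑ j, u j

/-- Uniform positive lower bound on the Lebesgue volume of relative-entropy balls:
for every `η > 0` there is `A > 0` such that for every probability vector `v` on
`{1,…,K}`, the set `{u ∈ S : H(v, Lu) ≤ η}` has (K-1)-dimensional Lebesgue measure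
at least `A`.  (The convention `H(v,w) = +∞` when `w_k = 0 < v_k` is encoded by the
positivity requirement `0 < (Lu)_k` whenever `0 < v_k`.) -/
theorem volume_entropy_ball_uniform_lower_bound
    (K : ℕ) (hK : 2 ≤ K) (η : ℝ) (hη : 0 < η) :
    ∃ A : ℝ, 0 < A ∧
      ∀ v : Fin K → ℝ, (∀ k, 0 ≤ v k) → (∀ k, v k ≤ 1) → ∑ k, v k = 1 →
        ENNReal.ofReal A ≤
          volume {u : Fin (K - 1) → ℝ |
            (∀ j, 0 ≤ u j ∧ u j ≤ 1) ∧ (∑ j, u j ≤ 1) ∧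
            (∀ k, 0 < v k → 0 < completeToSimplex K u k) ∧
            ∑ k, v k * Real.log (v k / completeToSimplex K u k) ≤ η} := by
  obtain ⟨n, rfl⟩ : ∃ n, K = n + 1 := ⟨K - 1, by omega⟩
  obtain ⟨c, hc⟩ : ∃ c, c = Real.exp (-η) := ⟨_, rfl⟩
  have hc0 : 0 < c := hc ▸ Real.exp_pos _
  have hc1 : c < 1 := by rw [hc]; exact Real.exp_lt_one_iff.mpr (by linarith)
  obtain ⟨δ, hδ⟩ : ∃ δ : ℝ, δ = (1 - c) / (n + 1) := ⟨_, rfl⟩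
  have hn : (0 : ℝ) < n + 1 := by positivity
  have hδ0 : 0 < δ := by rw [hδ]; exact div_pos (by linarith) hn
  have hδn : (n : ℝ) * δ + δ = 1 - c := by rw [hδ]; field_simp
  refine ⟨δ ^ n, by positivity, ?_⟩
  intro v hv0 hv1 hvs
  have hvol : volume (Set.Icc (fun j : Fin n => c * v j.castSucc)
      (fun j : Fin n => c * v j.castSucc + δ)) = ENNReal.ofReal (δ ^ n) := by
    rw [Real.volume_Icc_pi]
    simp [ENNReal.ofReal_pow hδ0.le]
  rw [← hvol]
  apply measure_mono
  intro u hu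
  change Fin n → ℝ at u
  have hl : ∀ j : Fin n, c * v j.castSucc ≤ u j := fun j => hu.1 j
  have hr : ∀ j : Fin n, u j ≤ c * v j.castSucc + δ := fun j => hu.2 j
  have hu0 : ∀ j, 0 ≤ u j := fun j => (mul_nonneg hc0.le (hv0 _)).trans (hl j)
  rw [Fin.sum_univ_castSucc] at hvs
  have hsum : ∑ j, u j ≤ c * (1 - v (Fin.last n)) + n * δ := by
    calc ∑ j, u j ≤ ∑ j : Fin n, (c * v j.castSucc + δ) := Finset.sum_le_sum fun j _ => hr j
      _ = c * (∑ j : Fin n, v j.castSucc) + n * δ := by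
        rw [Finset.sum_add_distrib, ← Finset.mul_sum]; simp
      _ = _ := by rw [← hvs]; ring
  have hlast : c * v (Fin.last n) ≤ 1 - ∑ j, u j := by linarith
  have hs1 : ∑ j, u j ≤ 1 := by
    have := mul_nonneg hc0.le (hv0 (Fin.last n))
    linarith
  have hw : ∀ k, c * v k ≤ completeToSimplex (n + 1) u k := by
    intro k
    refine Fin.lastCases ?_ (fun j => ?_) k
    · simpa [completeToSimplex] using hlast
    · simpa [completeToSimplex] using hl j
  have hpos : ∀ k, 0 < v k → 0 < completeToSimplex (n + 1) u k :=
    fun k hk => (mul_pos hc0 hk).trans_le (hw k)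
  refine ⟨fun j => ⟨hu0 j, ?_⟩, hs1, hpos, ?_⟩
  · exact (Finset.single_le_sum (fun i _ => hu0 i) (Finset.mem_univ j)).trans hs1
  · calc ∑ k, v k * Real.log (v k / completeToSimplex (n + 1) u k) ≤ ∑ k, v k * η := by
          refine Finset.sum_le_sum fun k _ => ?_
          rcases (hv0 k).eq_or_lt with h | h
          · simp [← h]
          · refine mul_le_mul_of_nonneg_left ?_ h.le
            rw [Real.log_le_iff_le_exp (div_pos h (hpos k h)), div_le_iff₀ (hpos k h)]
            have h2 := mul_le_mul_of_nonneg_left (hw k) (Real.exp_pos η).le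
            rwa [← mul_assoc, hc, ← Real.exp_add, add_neg_cancel, Real.exp_zero, one_mul] at h2
      _ = η := by rw [← Finset.sum_mul, Fin.sum_univ_castSucc, hvs, one_mul]
end
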